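/- arXiv:0806.1083 — 5 statements merged into one kernel-verified Lean document; each statement's English description precedes it below -/
import Mathlib

section
/- Let x ∈ [-1,1], λ₁, λ₂ ∈ [0.9,1], and 0 ≤ ε ≤ 0.5. Let α ∈ [1.198 + 1.198ε, 2.281 − 0.952ε]. Suppose (u_n)_{n≥0} and (b_n)_{n≥1} are sequences with u_0 = 0, u_1 = x, u_{n+1} = λ₁ u_n + λ₁λ₂ u_{n-1} − b_n for all n ≥ 1, where each b_n ∈ {-1,1}, b_{n+1} = 1 whenever u_n + α u_{n+1} > ε, and b_{n+1} = -1 whenever u_n + α u_{n+1} < -ε. Then the state sequence is bounded: there exists M such that |u_n| ≤ M for all n. -/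
lemma gre_key (s t α ε p q : ℝ) (hs1 : 1.45 ≤ s) (hs2 : s ≤ 1.6181)
    (ht1 : 0.55 ≤ t) (ht2 : t ≤ 0.6181)
    (hε : 0 ≤ ε) (hε' : ε ≤ 0.5)
    (ha : 1.198 + 1.198 * ε ≤ α) (hb : α ≤ 2.281 - 0.952 * ε)
    (hp : (2 - s) / (s * (s - 1)) < p) (hq : |q| ≤ 1 / (1 - t)) :
    ε * (s + t) < (1 + α * s) * p - (1 - α * t) * q := by
  have hα : 1.198 ≤ α := by linarith
  have hs0 : 0 < s * (s - 1) := by nlinarith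
  have hA1 : (0.3818 : ℝ) ≤ (2 - s) / (s * (s - 1)) := by
    rw [le_div_iff₀ hs0]; nlinarith
  have hA2 : (0.6178 : ℝ) ≤ s * ((2 - s) / (s * (s - 1))) := by
    have : s * ((2 - s) / (s * (s - 1))) = (2 - s) / (s - 1) := by
      have h1 : s ≠ 0 := by linarith
      have h2 : s - 1 ≠ 0 := by intro h; linarith
      field_simp
    rw [this, le_div_iff₀ (by linarith)]; linarith
  have hA : 0.3818 + 0.6178 * α ≤ (1 + α * s) * ((2 - s) / (s * (s - 1))) := by
    nlinarith
  have hA' : 0.3818 + 0.6178 * α < (1 + α * s) * p :=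
    lt_of_le_of_lt hA (mul_lt_mul_of_pos_left hp (by nlinarith))
  have hE : ε * (s + t) ≤ 2.2362 * ε := by nlinarith
  have hQ : (1 - α * t) * q ≤ |1 - α * t| * (1 / (1 - t)) := by
    calc (1 - α * t) * q ≤ |(1 - α * t) * q| := le_abs_self _
      _ = |1 - α * t| * |q| := abs_mul _ _
      _ ≤ _ := mul_le_mul_of_nonneg_left hq (abs_nonneg _)
  have hB1 : (1 - α * t) * (1 / (1 - t)) ≤ (1 - 0.55 * α) / 0.45 := by
    rw [mul_one_div, div_le_div_iff₀ (by linarith) (by norm_num)]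
    nlinarith
  have hB2 : -(1 - α * t) * (1 / (1 - t)) ≤ (0.6181 * α - 1) / 0.3819 := by
    rw [mul_one_div, div_le_div_iff₀ (by linarith) (by norm_num)]
    nlinarith
  rcases abs_cases (1 - α * t) with ⟨h, _⟩ | ⟨h, _⟩
  · rw [h] at hQ; norm_num at *; linarith
  · rw [h] at hQ; norm_num at *; linarith

/-- For α ∈ [1.198+1.198ε, 2.281−0.952ε] and a flaky quantizer with tolerance at most ε,
the leaky GRE state sequence starting from (0,x) with x ∈ [-1,1] is bounded. -/
theorem leaky_GRE_bounded_states (x l₁ l₂ ε α : ℝ)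
    (hx : x ∈ Set.Icc (-1 : ℝ) 1)
    (h1 : l₁ ∈ Set.Icc (0.9 : ℝ) 1) (h2 : l₂ ∈ Set.Icc (0.9 : ℝ) 1)
    (hε : 0 ≤ ε) (hε' : ε ≤ 0.5)
    (hα : α ∈ Set.Icc (1.198 + 1.198 * ε) (2.281 - 0.952 * ε))
    (u b : ℕ → ℝ)
    (hu0 : u 0 = 0) (hu1 : u 1 = x)
    (hb : ∀ n ≥ 1, b n = 1 ∨ b n = -1)
    (hrec : ∀ n ≥ 1, u (n + 1) = l₁ * u n + l₁ * l₂ * u (n - 1) - b n)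
    (hq1 : ∀ n, u n + α * u (n + 1) > ε → b (n + 1) = 1)
    (hq2 : ∀ n, u n + α * u (n + 1) < -ε → b (n + 1) = -1) :
    ∃ M, ∀ n, |u n| ≤ M := by
  obtain ⟨hx1, hx2⟩ := hx
  obtain ⟨h11, h12⟩ := h1
  obtain ⟨h21, h22⟩ := h2
  obtain ⟨ha, ha'⟩ := hα
  obtain ⟨s, t, hst, hpr, hs1, hs2, ht1, ht2⟩ : ∃ s t : ℝ, s - t = l₁ ∧ s * t = l₁ * l₂ ∧
      1.45 ≤ s ∧ s ≤ 1.6181 ∧ 0.55 ≤ t ∧ t ≤ 0.6181 := by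
    have hl : (0.81 : ℝ) ≤ l₁ * l₂ := by nlinarith
    have hl' : l₁ * l₂ ≤ 1 := by nlinarith
    have hD : 0 ≤ l₁ ^ 2 + 4 * (l₁ * l₂) := by positivity
    obtain ⟨r, hr⟩ : ∃ r, r = √(l₁ ^ 2 + 4 * (l₁ * l₂)) := ⟨_, rfl⟩
    have hr0 : 0 ≤ r := hr ▸ Real.sqrt_nonneg _
    have hr2 : r ^ 2 = l₁ ^ 2 + 4 * (l₁ * l₂) := by rw [hr, Real.sq_sqrt hD]
    have hrl : 2.01 ≤ r := by
      by_contra hc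
      push Not at hc
      nlinarith
    have hru : r ≤ 2.2361 := by nlinarith
    refine ⟨(l₁ + r) / 2, (r - l₁) / 2, by ring, by nlinarith, by linarith, by linarith, ?_, ?_⟩
    · have : 1.1 + l₁ ≤ r := by
        by_contra hc
        push Not at hc
        nlinarith
      linarith
    · have : r ≤ 1.2362 + l₁ := by
        by_contra hc
        push Not at hc
        nlinarith
      linarith
  have hs0 : 0 < s - 1 := by linarith
  have ht0 : 0 < 1 - t := by linarith
  have hrec' : ∀ n, u (n + 2) = (s - t) * u (n + 1) + s * t * u n - b (n + 1) := by
    intro n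
    have := hrec (n + 1) (by omega)
    rw [hst, hpr]; simpa using this
  have hP1 : 1 ≤ 1 / (s - 1) := by rw [le_div_iff₀ hs0]; linarith
  have hQ1 : 1 ≤ 1 / (1 - t) := by rw [le_div_iff₀ ht0]; linarith
  have hPe : s * (1 / (s - 1)) - 1 = 1 / (s - 1) := by field_simp; ring
  have hQe : t * (1 / (1 - t)) + 1 = 1 / (1 - t) := by field_simp; ring
  have hce : s * ((2 - s) / (s * (s - 1))) + 1 = 1 / (s - 1) := by
    have : s ≠ 0 := by linarith
    field_simp; ring
  have hinv : ∀ n, |u (n + 1) + t * u n| ≤ 1 / (s - 1) ∧ |u (n + 1) - s * u n| ≤ 1 / (1 - t) := by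
    intro n
    induction n with
    | zero =>
      have : |x| ≤ 1 := abs_le.mpr ⟨hx1, hx2⟩
      simp only [zero_add, hu0, hu1, mul_zero, add_zero, sub_zero]
      exact ⟨this.trans hP1, this.trans hQ1⟩
    | succ n ih =>
      obtain ⟨ihp, ihq⟩ := ih
      have hbn := hb (n + 1) (by omega)
      have k1 := gre_key s t α ε (u (n + 1) + t * u n) (u (n + 1) - s * u n)
        hs1 hs2 ht1 ht2 hε hε' ha ha'
      have k2 := gre_key s t α ε (-(u (n + 1) + t * u n)) (-(u (n + 1) - s * u n))
        hs1 hs2 ht1 ht2 hε hε' ha ha'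
      rw [abs_neg] at k2
      have e1 : u (n + 1 + 1) + t * u (n + 1) = s * (u (n + 1) + t * u n) - b (n + 1) := by
        rw [hrec' n]; ring
      have e2 : u (n + 1 + 1) - s * u (n + 1) = -t * (u (n + 1) - s * u n) - b (n + 1) := by
        rw [hrec' n]; ring
      rw [e1, e2]
      have hid : (1 + α * s) * (u (n + 1) + t * u n) - (1 - α * t) * (u (n + 1) - s * u n)
          = (s + t) * (u n + α * u (n + 1)) := by ring
      have f1 : (2 - s) / (s * (s - 1)) < u (n + 1) + t * u n → b (n + 1) = 1 := by
        intro h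
        have := k1 h ihq
        rw [hid] at this
        apply hq1
        nlinarith
      have f2 : (2 - s) / (s * (s - 1)) < -(u (n + 1) + t * u n) → b (n + 1) = -1 := by
        intro h
        have := k2 h ihq
        apply hq2
        nlinarith
      generalize u (n + 1) + t * u n = p at *
      generalize u (n + 1) - s * u n = q at *
      generalize 1 / (s - 1) = P at *
      generalize 1 / (1 - t) = Q at *
      generalize (2 - s) / (s * (s - 1)) = c at *
      rw [abs_le] at *
      obtain ⟨p1, p2⟩ := ihp
      obtain ⟨q1, q2⟩ := ihq
      have hsp : (0 : ℝ) ≤ s := by linarith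
      have htp : (0 : ℝ) ≤ t := by linarith
      have m1 := mul_le_mul_of_nonneg_left p1 hsp
      have m2 := mul_le_mul_of_nonneg_left p2 hsp
      have m3 := mul_le_mul_of_nonneg_left q1 htp
      have m4 := mul_le_mul_of_nonneg_left q2 htp
      refine ⟨?_, ?_⟩
      · rcases hbn with h | h
        · have : -p ≤ c := by
            by_contra hc
            push Not at hc
            linarith [f2 hc]
          have m5 := mul_le_mul_of_nonneg_left this hsp
          rw [h]
          constructor <;> linarith
        · have : p ≤ c := by
            by_contra hc
            push Not at hc
            linarith [f1 hc]
          have m5 := mul_le_mul_of_nonneg_left this hsp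
          rw [h]
          constructor <;> linarith
      · rcases hbn with h | h <;> rw [h, abs_le] <;> constructor <;> linarith
  refine ⟨1 / (s - 1) + 1 / (1 - t), fun n => ?_⟩
  obtain ⟨hp, hq⟩ := hinv n
  have e : (s + t) * u n = (u (n + 1) + t * u n) - (u (n + 1) - s * u n) := by ring
  have h3 : |(s + t) * u n| ≤ 1 / (s - 1) + 1 / (1 - t) := by
    rw [e]; exact (abs_sub _ _).trans (add_le_add hp hq)
  rw [abs_mul, abs_of_pos (by linarith : 0 < s + t)] at h3
  nlinarith [abs_nonneg (u n)]
end

section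
/- For every ρ with 0 < ρ ≤ 0.649 there exists δ > 0 such that for every sequence (a_j)_{j≥1} with a_j ∈ {-1,0,1} and every x ∈ [0, ρ]: if 1 + Σ_{j=1}^∞ a_j x^j < δ, then Σ_{j=1}^∞ j a_j x^{j-1} < -δ. -/
lemma ps_h_pos (x : ℝ) (h0 : 0 < x) (h1 : x ≤ 0.649) :
    0.0001 ≤ 1 - x - x ^ 2 - x ^ 3 + 0.0894 * x ^ 4 + x ^ 5 / (1 - x) := by
  have hx : 0 < 1 - x := by linarith
  have key : 0.0001 ≤ 1 - 2 * x + 1.0894 * x ^ 4 + 0.9106 * x ^ 5 := by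
    have hb : x ^ 2 ≤ 0.649 ^ 2 := by gcongr
    have hc : x ^ 3 ≤ 0.649 ^ 3 := by gcongr
    have hd : x ^ 4 ≤ 0.649 ^ 4 := by gcongr
    have hw : 0 ≤ (0.649 - x) * (2 - 1.0894 * (x ^ 3 + x ^ 2 * 0.649 + x * 0.649 ^ 2 + 0.649 ^ 3)
        - 0.9106 * (x ^ 4 + x ^ 3 * 0.649 + x ^ 2 * 0.649 ^ 2 + x * 0.649 ^ 3 + 0.649 ^ 4)) := by
      apply mul_nonneg
      · linarith
      · norm_num at *
        linarith
    norm_num at *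
    linarith
  have e : 1 - x - x ^ 2 - x ^ 3 + 0.0894 * x ^ 4 + x ^ 5 / (1 - x)
      = (1 - 2 * x + 1.0894 * x ^ 4 + 0.9106 * x ^ 5) / (1 - x) := by
    field_simp
    ring
  rw [e, le_div_iff₀ hx]
  linarith

lemma ps_h_deriv (x : ℝ) (h0 : 0 < x) (h1 : x ≤ 0.649) :
    -1 - 2 * x - 3 * x ^ 2 + 4 * 0.0894 * x ^ 3 + (5 * x ^ 4 / (1 - x) + x ^ 5 / (1 - x) ^ 2)
      ≤ -0.0001 := by
  have hx : 0 < 1 - x := by linarith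
  have key : -1 + 4.3576 * x ^ 3 + 1.2848 * x ^ 4 - 3.6424 * x ^ 5 ≤ -0.0001 := by
    have hw : 0 ≤ (0.649 - x) * ((0.649 ^ 2 + 0.649 * x + x ^ 2)
        * (4.3576 + 1.2848 * 0.649 - 3.6424 * 0.649 ^ 2)
        - x ^ 3 * (3.6424 * (x + 0.649) - 1.2848)) := by
      apply mul_nonneg
      · linarith
      · have h3 : 0 ≤ x ^ 2 * (0.649 - x) := mul_nonneg (by positivity) (by linarith)
        have h4 : 0 ≤ x ^ 3 * (0.649 - x) := mul_nonneg (by positivity) (by linarith)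
        have h2 : 0 < x ^ 2 := by positivity
        have h5 : 0 < x ^ 3 := by positivity
        norm_num at *
        linarith
    norm_num at *
    linarith
  have e : -1 - 2 * x - 3 * x ^ 2 + 4 * 0.0894 * x ^ 3
        + (5 * x ^ 4 / (1 - x) + x ^ 5 / (1 - x) ^ 2)
      = (-1 + 4.3576 * x ^ 3 + 1.2848 * x ^ 4 - 3.6424 * x ^ 5) / (1 - x) ^ 2 := by
    field_simp
    ring
  rw [e, div_le_iff₀ (by positivity)]
  nlinarith

lemma ps_main (b : ℕ → ℝ) (hb : ∀ j, b j = -1 ∨ b j = 0 ∨ b j = 1) (x : ℝ) (h0 : 0 < x)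
    (h1 : x ≤ 0.649) (hg : 1 + (∑' j : ℕ, b j * x ^ (j + 1)) < 0.0001) :
    (∑' j : ℕ, ((j : ℝ) + 1) * b j * x ^ j) < -0.0001 := by
  have hx : 0 < 1 - x := by linarith
  have hn : ‖x‖ < 1 := by rw [Real.norm_of_nonneg h0.le]; linarith
  have habs : ∀ j, |b j| ≤ 1 := by
    intro j; rcases hb j with h | h | h <;> simp [h]
  have hS0 : HasSum (fun j : ℕ => x ^ (j + 1)) (x / (1 - x)) := by
    have := (hasSum_geometric_of_norm_lt_one hn).mul_left x
    simpa [pow_succ', div_eq_mul_inv] using this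
  have hS1 : HasSum (fun j : ℕ => ((j : ℝ) + 1) * x ^ j) (1 / (1 - x) ^ 2) := by
    have h := (hasSum_nat_add_iff' (f := fun n : ℕ => (n : ℝ) * x ^ n) 1).2
      (hasSum_coe_mul_geometric_of_norm_lt_one hn)
    have := h.mul_left x⁻¹
    have e1 : (fun j : ℕ => ((j : ℝ) + 1) * x ^ j)
        = fun i : ℕ => x⁻¹ * (((i + 1 : ℕ) : ℝ) * x ^ (i + 1)) := by
      funext j; push_cast; field_simp; ring
    have e2 : 1 / (1 - x) ^ 2
        = x⁻¹ * (x / (1 - x) ^ 2 - ∑ i ∈ Finset.range 1, (i : ℝ) * x ^ i) := by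
      simp; field_simp
    rw [e1, e2]
    exact this
  have s0 : Summable (fun j : ℕ => b j * x ^ (j + 1)) := by
    refine Summable.of_norm_bounded hS0.summable fun j => ?_
    rw [norm_mul, Real.norm_eq_abs, Real.norm_of_nonneg (by positivity)]
    exact mul_le_of_le_one_left (by positivity) (habs j)
  have s1 : Summable (fun j : ℕ => ((j : ℝ) + 1) * b j * x ^ j) := by
    refine Summable.of_norm_bounded hS1.summable fun j => ?_
    have : ((j : ℝ) + 1) * b j * x ^ j = b j * (((j : ℝ) + 1) * x ^ j) := by ring
    rw [this, norm_mul, Real.norm_eq_abs, Real.norm_of_nonneg (by positivity)]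
    exact mul_le_of_le_one_left (by positivity) (habs j)
  set A := ∑' j : ℕ, b j * x ^ (j + 1) with hA
  set B := ∑' j : ℕ, ((j : ℝ) + 1) * b j * x ^ j with hB
  have main : ∀ l : ℝ, l ≤ 4 →
      ∑ j ∈ Finset.range 4, ((j : ℝ) + 1 - l) * (1 - b j) * x ^ (j + 1)
        ≤ x * (1 / (1 - x) ^ 2 - B) - l * (x / (1 - x) - A) := by
    intro l hl
    have hs : HasSum (fun j : ℕ => ((j : ℝ) + 1 - l) * (1 - b j) * x ^ (j + 1))
        (x * (1 / (1 - x) ^ 2 - B) - l * (x / (1 - x) - A)) := by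
      have := ((hS1.sub s1.hasSum).mul_left x).sub ((hS0.sub s0.hasSum).mul_left l)
      have e : (fun j : ℕ => ((j : ℝ) + 1 - l) * (1 - b j) * x ^ (j + 1))
          = fun j : ℕ => x * (((j : ℝ) + 1) * x ^ j - ((j : ℝ) + 1) * b j * x ^ j)
            - l * (x ^ (j + 1) - b j * x ^ (j + 1)) := by
        funext j; ring
      rw [e]
      exact this
    refine sum_le_hasSum _ (fun j hj => ?_) hs
    have h4 : 4 ≤ j := by simpa using hj
    have h4' : (4 : ℝ) ≤ j := by exact_mod_cast h4
    have := abs_le.1 (habs j)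
    exact mul_nonneg (mul_nonneg (by linarith) (by linarith)) (by positivity)
  have hh := ps_h_pos x h0 h1
  have hd := ps_h_deriv x h0 h1
  have e0 : x / (1 - x) = x + x ^ 2 + x ^ 3 + x ^ 4 + x ^ 5 / (1 - x) := by
    field_simp; ring
  have e1 : 1 / (1 - x) ^ 2 = 1 + 2 * x + 3 * x ^ 2 + 4 * x ^ 3
      + (5 * x ^ 4 / (1 - x) + x ^ 5 / (1 - x) ^ 2) := by
    field_simp; ring
  set H := x ^ 5 / (1 - x)
  set D := 5 * x ^ 4 / (1 - x) + x ^ 5 / (1 - x) ^ 2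
  have b0 := (abs_le.1 (habs 0)).1
  have b1 := (abs_le.1 (habs 1)).1
  have b2 := (abs_le.1 (habs 2)).1
  have p0 : 0 ≤ (b 0 + 1) * x := mul_nonneg (by linarith) (by positivity)
  have p1 : 0 ≤ (b 1 + 1) * x ^ 2 := mul_nonneg (by linarith) (by positivity)
  have p2 : 0 ≤ (b 2 + 1) * x ^ 3 := mul_nonneg (by linarith) (by positivity)
  have p4 : 0 < x ^ 4 := by positivity
  have hd' := mul_le_mul_of_nonneg_left hd h0.le
  have fin : x * B < x * (-0.0001) := by
    rcases le_or_gt (b 3) 0 with h3 | h3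
    · have m := main 3 (by norm_num)
      rw [e0, e1] at m
      simp only [Finset.sum_range_succ, Finset.sum_range_zero] at m
      have p3 : 0 ≤ (0.0894 - b 3) * x ^ 4 := mul_nonneg (by linarith) (by positivity)
      norm_num at *
      linarith
    · have h3' : b 3 = 1 := by
        rcases hb 3 with h | h | h <;> linarith
      have m := main 4 (by norm_num)
      rw [e0, e1] at m
      simp only [Finset.sum_range_succ, Finset.sum_range_zero] at m
      norm_num at *
      linarith
  exact lt_of_mul_lt_mul_left fin h0.le

/-- Peres–Solomyak δ-transversality: for every ρ ≤ 0.649 there is δ > 0 such that for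
any power series g(x) = 1 + Σ_{j≥1} a_j x^j with a_j ∈ {-1,0,1} and x ∈ [0,ρ],
g(x) < δ implies g'(x) < -δ. -/
theorem peres_solomyak_transversality :
    ∀ ρ : ℝ, 0 < ρ → ρ ≤ 0.649 →
      ∃ δ > 0, ∀ a : ℕ → ℝ, (∀ j ≥ 1, a j = -1 ∨ a j = 0 ∨ a j = 1) →
        ∀ x ∈ Set.Icc (0 : ℝ) ρ,
          1 + (∑' j : ℕ, a (j + 1) * x ^ (j + 1)) < δ →
          (∑' j : ℕ, ((j : ℝ) + 1) * a (j + 1) * x ^ j) < -δ := by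
  intro ρ _ hρ
  refine ⟨0.0001, by norm_num, fun a ha x hx hg => ?_⟩
  rcases hx.1.eq_or_lt with h | h
  · subst h
    norm_num at hg
  · exact ps_main (fun j => a (j + 1)) (fun j => ha (j + 1) (by omega)) x h (hx.2.trans hρ) hg
end

section
/- Let (b_j)_{j≥0} be a sequence with b_0 ∈ {-1,1} and b_j ∈ {-1,0,1} for all j ≥ 1, and let g(x) = Σ_{j=0}^∞ b_j x^j. Then g has at most one root in the interval (0, 0.649]: if x₁, x₂ ∈ (0, 0.649] satisfy g(x₁) = g(x₂) = 0, then x₁ = x₂. Moreover any such root is simple: if x₀ ∈ (0, 0.649] and g(x₀) = 0, then the term-by-term derivative Σ_{j=1}^∞ j b_j x₀^{j-1} is nonzero. -/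
lemma P_pos (x : ℝ) (h0 : 0 < x) (h1 : x ≤ 0.649) : 0 < 4 - 11*x + 8*x^2 - 2*x^5 := by
  have h3 : x^3 ≤ 0.649^3 := by gcongr
  have h5 : x^5 ≤ x^2 * 0.649^3 := by
    have := mul_le_mul_of_nonneg_left h3 (sq_nonneg x)
    calc x^5 = x^2 * x^3 := by ring
      _ ≤ _ := this
  have hq : 0 < 4 - 11*x + (8 - 2*0.649^3)*x^2 := by
    norm_num at h1 ⊢
    nlinarith [mul_nonneg (sub_nonneg.2 h1) h0.le, mul_nonneg (sub_nonneg.2 h1) (sub_nonneg.2 h1)]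
  linarith

/-- The extremal comparison function. -/
noncomputable def HB (x : ℝ) : ℝ := 1/(1-x) - 2*x - 2*x^2 - 2*x^3

/-- The Euler derivative of the comparison function. -/
noncomputable def DB (x : ℝ) : ℝ := x/(1-x)^2 - 2*x - 4*x^2 - 6*x^3

/-- Coefficients of the comparison function. -/
noncomputable def eB (j : ℕ) : ℝ := if j ∈ Finset.Icc 1 3 then -1 else 1

lemma key (x : ℝ) (h0 : 0 < x) (h1 : x ≤ 0.649) : 0 < 4 * HB x - DB x := by
  have hx : 0 < 1 - x := by norm_num at h1; linarith
  have e : 4 * HB x - DB x = (4 - 11*x + 8*x^2 - 2*x^5) / (1-x)^2 := by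
    unfold HB DB; field_simp; ring
  rw [e]; exact div_pos (P_pos x h0 h1) (by positivity)

lemma anti : StrictAntiOn (fun x => HB x / x^4) (Set.Ioc (0:ℝ) 0.649) := by
  have hd : ∀ x ∈ Set.Ioc (0:ℝ) 0.649,
      HasDerivAt (fun x => HB x / x^4) (-(4 * HB x - DB x) / x^5) x := by
    intro x hx
    have h0 : x ≠ 0 := hx.1.ne'
    have h1 : (1 - x) ≠ 0 := by
      have := hx.2
      norm_num at this
      intro h; linarith
    have hi := (hasDerivAt_id x).const_sub 1
    have H := ((((hasDerivAt_const x (1:ℝ)).div hi h1).sub ((hasDerivAt_id x).const_mul 2)).sub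
      (((hasDerivAt_id x).pow 2).const_mul 2)).sub (((hasDerivAt_id x).pow 3).const_mul 2)
    have H2 := H.div ((hasDerivAt_id x).pow 4) (pow_ne_zero 4 h0)
    have H3 : HasDerivAt (fun x => HB x / x^4) _ x := H2
    refine H3.congr_deriv ?_
    simp [HB, DB]
    field_simp
    ring
  apply strictAntiOn_of_deriv_neg (convex_Ioc _ _)
  · exact fun x hx => (hd x hx).continuousAt.continuousWithinAt
  · intro x hx
    have hx' := interior_subset hx
    rw [(hd x hx').deriv]
    exact div_neg_of_neg_of_pos (neg_neg_of_pos (key x hx'.1 hx'.2)) (pow_pos hx'.1 5)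

lemma eB_eq (j : ℕ) : eB j = 1 + (if j ∈ Finset.Icc 1 3 then -2 else 0) := by
  unfold eB; split_ifs <;> norm_num

lemma hasSum_HB (x : ℝ) (h0 : 0 < x) (h1 : x < 1) : HasSum (fun j => eB j * x^j) (HB x) := by
  have a := hasSum_geometric_of_lt_one h0.le h1
  have c : HasSum (fun j : ℕ => (if j ∈ Finset.Icc 1 3 then (-2:ℝ) else 0) * x^j)
      (∑ j ∈ Finset.Icc 1 3, (if j ∈ Finset.Icc 1 3 then (-2:ℝ) else 0) * x^j) :=
    hasSum_sum_of_ne_finset_zero (by intro j hj; rw [if_neg hj, zero_mul])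
  convert a.add c using 1
  · ext j; rw [eB_eq]; ring
  · rw [show Finset.Icc 1 3 = {1,2,3} from rfl]
    simp [HB]; ring

lemma hasSum_DB (x : ℝ) (h0 : 0 < x) (h1 : x < 1) :
    HasSum (fun j : ℕ => (j:ℝ) * (eB j * x^j)) (DB x) := by
  have a := hasSum_coe_mul_geometric_of_norm_lt_one (r := x)
    (by rw [Real.norm_eq_abs, abs_of_pos h0]; exact h1)
  have c : HasSum (fun j : ℕ => (if j ∈ Finset.Icc 1 3 then (-2:ℝ) else 0) * (j * x^j))
      (∑ j ∈ Finset.Icc (1:ℕ) 3, (if j ∈ Finset.Icc (1:ℕ) 3 then (-2:ℝ) else 0) * (j * x^j)) :=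
    hasSum_sum_of_ne_finset_zero (by intro j hj; rw [if_neg hj, zero_mul])
  have hv : x / (1-x)^2 + (∑ j ∈ Finset.Icc (1:ℕ) 3,
      (if j ∈ Finset.Icc (1:ℕ) 3 then (-2:ℝ) else 0) * (j * x^j)) = DB x := by
    rw [show Finset.Icc 1 3 = {1,2,3} from rfl]
    simp [DB]; ring
  have hf : (fun j : ℕ => (j:ℝ) * (eB j * x^j)) = fun j : ℕ =>
      (j:ℝ) * x^j + (if j ∈ Finset.Icc 1 3 then (-2:ℝ) else 0) * (j * x^j) := by
    ext j; rw [eB_eq]; ring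
  rw [hf, ← hv]
  exact a.add c

lemma main_pos (b : ℕ → ℝ) (hb0 : b 0 = 1) (hb : ∀ j, |b j| ≤ 1) :
    (∀ x₁ ∈ Set.Ioc (0 : ℝ) 0.649, ∀ x₂ ∈ Set.Ioc (0 : ℝ) 0.649, x₁ < x₂ →
      (∑' j : ℕ, b j * x₁ ^ j) = 0 → (∑' j : ℕ, b j * x₂ ^ j) = 0 → False) ∧
    (∀ x₀ ∈ Set.Ioc (0 : ℝ) 0.649, (∑' j : ℕ, b j * x₀ ^ j) = 0 →
      (∑' j : ℕ, ((j : ℝ) + 1) * b (j + 1) * x₀ ^ j) ≠ 0) := by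
  have lt1 : ∀ x ∈ Set.Ioc (0:ℝ) 0.649, x < 1 := by
    intro x hx; have := hx.2; norm_num at this; linarith
  have hc1 : ∀ j ≤ 3, 0 ≤ b j - eB j := by
    intro j hj
    by_cases h : j = 0
    · subst h; simp [eB, hb0]
    · rw [eB, if_pos (Finset.mem_Icc.2 ⟨by omega, hj⟩)]
      linarith [(abs_le.1 (hb j)).1]
  have hc2 : ∀ j ≥ 4, b j - eB j ≤ 0 := by
    intro j hj
    rw [eB, if_neg (by rw [Finset.mem_Icc]; omega)]
    linarith [(abs_le.1 (hb j)).2]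
  have hs : ∀ x ∈ Set.Ioc (0:ℝ) 0.649, Summable (fun j => b j * x^j) := by
    intro x hx
    apply Summable.of_norm_bounded (summable_geometric_of_lt_one hx.1.le (lt1 x hx))
    intro j
    rw [norm_mul, Real.norm_eq_abs, Real.norm_eq_abs, abs_of_pos (pow_pos hx.1 j)]
    exact mul_le_of_le_one_left (pow_pos hx.1 j).le (hb j)
  have hC : ∀ x ∈ Set.Ioc (0:ℝ) 0.649, (∑' j : ℕ, b j * x ^ j) = 0 →
      HasSum (fun j => (b j - eB j) * x^j) (-HB x) := by
    intro x hx h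
    have := (hs x hx).hasSum.sub (hasSum_HB x hx.1 (lt1 x hx))
    rw [h, zero_sub] at this
    simpa only [sub_mul] using this
  constructor
  · intro x hx y hy hxy h1 h2
    have A := (hC x hx h1).mul_right (y^4)
    have B := (hC y hy h2).mul_right (x^4)
    have hle := hasSum_le (f := fun j => (b j - eB j) * y^j * x^4)
      (g := fun j => (b j - eB j) * x^j * y^4) ?_ B A
    · have := anti hx hy hxy
      simp only at this
      rw [div_lt_div_iff₀ (pow_pos hy.1 4) (pow_pos hx.1 4)] at this
      linarith
    · intro j
      simp only [mul_assoc]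
      rcases Nat.lt_or_ge j 4 with hj | hj
      · apply mul_le_mul_of_nonneg_left _ (hc1 j (by omega))
        obtain ⟨m, hm⟩ := Nat.exists_eq_add_of_lt hj
        have e : 4 = j + (m+1) := by omega
        rw [e, pow_add, pow_add y]
        have := pow_le_pow_left₀ hx.1.le hxy.le (m+1)
        have := mul_le_mul_of_nonneg_left this (mul_pos (pow_pos hx.1 j) (pow_pos hy.1 j)).le
        linarith
      · apply mul_le_mul_of_nonpos_left _ (hc2 j hj)
        obtain ⟨m, rfl⟩ := Nat.exists_eq_add_of_le hj
        rw [pow_add, pow_add y]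
        have := pow_le_pow_left₀ hx.1.le hxy.le m
        have := mul_le_mul_of_nonneg_left this (mul_pos (pow_pos hx.1 4) (pow_pos hy.1 4)).le
        linarith
  · intro x hx h h'
    have hsum : Summable (fun j : ℕ => (j:ℝ) * (b j * x^j)) := by
      have a := hasSum_coe_mul_geometric_of_norm_lt_one (r := x)
        (by rw [Real.norm_eq_abs, abs_of_pos hx.1]; exact lt1 x hx)
      apply Summable.of_norm_bounded a.summable
      intro j
      rw [norm_mul, norm_mul, Real.norm_eq_abs, Real.norm_eq_abs, Real.norm_eq_abs,
        abs_of_pos (pow_pos hx.1 j), Nat.abs_cast]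
      exact mul_le_mul_of_nonneg_left (mul_le_of_le_one_left (pow_pos hx.1 j).le (hb j))
        (Nat.cast_nonneg j)
    have hz : ∑' j : ℕ, (j:ℝ) * (b j * x^j) = 0 := by
      rw [hsum.tsum_eq_zero_add]
      have : ∀ j : ℕ, ((j+1 : ℕ):ℝ) * (b (j+1) * x^(j+1)) =
          x * (((j : ℝ) + 1) * b (j + 1) * x ^ j) := by
        intro j; push_cast; ring
      simp_rw [this]
      rw [tsum_mul_left, h']
      simp
    have A := hsum.hasSum.sub (hasSum_DB x hx.1 (lt1 x hx))
    rw [hz] at A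
    have B := (hC x hx h).mul_left 4
    have hle := hasSum_le ?_ A B
    · linarith [key x hx.1 hx.2]
    · intro j
      have hp := pow_pos hx.1 j
      rw [show (j:ℝ) * (b j * x^j) - j * (eB j * x^j) = j * ((b j - eB j) * x^j) by ring]
      rcases Nat.lt_or_ge j 4 with hj | hj
      · have : (j:ℝ) ≤ 4 := by exact_mod_cast hj.le
        exact mul_le_mul_of_nonneg_right this (mul_nonneg (hc1 j (by omega)) hp.le)
      · have : (4:ℝ) ≤ j := by exact_mod_cast hj
        exact mul_le_mul_of_nonpos_right this
          (mul_nonpos_of_nonpos_of_nonneg (hc2 j hj) hp.le)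

lemma main_pos' (b : ℕ → ℝ) (hb0 : b 0 = 1) (hb : ∀ j, |b j| ≤ 1) :
    (∀ x₁ ∈ Set.Ioc (0 : ℝ) 0.649, ∀ x₂ ∈ Set.Ioc (0 : ℝ) 0.649,
      (∑' j : ℕ, b j * x₁ ^ j) = 0 → (∑' j : ℕ, b j * x₂ ^ j) = 0 → x₁ = x₂) ∧
    (∀ x₀ ∈ Set.Ioc (0 : ℝ) 0.649, (∑' j : ℕ, b j * x₀ ^ j) = 0 →
      (∑' j : ℕ, ((j : ℝ) + 1) * b (j + 1) * x₀ ^ j) ≠ 0) := by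
  obtain ⟨h1, h2⟩ := main_pos b hb0 hb
  refine ⟨fun x hx y hy ex ey => ?_, h2⟩
  rcases lt_trichotomy x y with h | h | h
  · exact (h1 x hx y hy h ex ey).elim
  · exact h
  · exact (h1 y hy x hx h ey ex).elim

/-- A power series ±1 + Σ_{j≥1} b_j x^j with b_j ∈ {-1,0,1} has at most one root in
(0, 0.649], and any such root is simple (the term-by-term derivative is nonzero there). -/
theorem class_B_at_most_one_root (b : ℕ → ℝ)
    (hb0 : b 0 = 1 ∨ b 0 = -1)
    (hb : ∀ j ≥ 1, b j = -1 ∨ b j = 0 ∨ b j = 1) :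
    (∀ x₁ ∈ Set.Ioc (0 : ℝ) 0.649, ∀ x₂ ∈ Set.Ioc (0 : ℝ) 0.649,
      (∑' j : ℕ, b j * x₁ ^ j) = 0 → (∑' j : ℕ, b j * x₂ ^ j) = 0 → x₁ = x₂) ∧
    (∀ x₀ ∈ Set.Ioc (0 : ℝ) 0.649, (∑' j : ℕ, b j * x₀ ^ j) = 0 →
      (∑' j : ℕ, ((j : ℝ) + 1) * b (j + 1) * x₀ ^ j) ≠ 0) := by
  have hb' : ∀ j, |b j| ≤ 1 := by
    intro j
    rcases Nat.eq_zero_or_pos j with rfl | hj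
    · rcases hb0 with h | h <;> simp [h]
    · rcases hb j hj with h | h | h <;> simp [h]
  rcases hb0 with h | h
  · exact main_pos' b h hb'
  · have := main_pos' (fun j => - b j) (by simp [h]) (by simpa using hb')
    simpa only [neg_mul, mul_neg, tsum_neg, neg_eq_zero, ne_eq] using this
end

section
/- Let φ = (1+√5)/2 and let 0 ≤ ν < 1. Suppose (u_j)_{j≥1} and (b_j)_{j≥1} are sequences with u_1 = 0, u_{j+1} = φ(u_j − b_j) for all j ≥ 1, where each b_j ∈ {-1,1}, b_j = 1 whenever u_j > ν, and b_j = -1 whenever u_j < -ν. Then for every j ≥ 0, b_{3j+2} = b_{3j+3} = −b_{3j+1}. -/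
/-- The beta-encoder with base φ applied to x = 0 (so u₁ = 0) and a flaky quantizer of
tolerance ν < 1 produces a bitstream with the periodic pattern
b_{3j+2} = b_{3j+3} = -b_{3j+1}. -/
theorem golden_base_zero_expansion_periodic (ν : ℝ) (hν : 0 ≤ ν) (hν' : ν < 1)
    (u b : ℕ → ℝ) (hu1 : u 1 = 0)
    (hrec : ∀ j ≥ 1, u (j + 1) = (1 + Real.sqrt 5) / 2 * (u j - b j))
    (hb : ∀ j ≥ 1, b j = 1 ∨ b j = -1)
    (hq1 : ∀ j ≥ 1, u j > ν → b j = 1)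
    (hq2 : ∀ j ≥ 1, u j < -ν → b j = -1) :
    ∀ j : ℕ, b (3 * j + 2) = -b (3 * j + 1) ∧ b (3 * j + 3) = -b (3 * j + 1) := by
  have hs : Real.sqrt 5 * Real.sqrt 5 = 5 := Real.mul_self_sqrt (by norm_num)
  have hs2 : 1 < Real.sqrt 5 := by
    rw [Real.lt_sqrt] <;> norm_num
  have step : ∀ k ≥ 1, u k = 0 →
      (b (k + 1) = -b k ∧ b (k + 2) = -b k) ∧ u (k + 3) = 0 := by
    intro k hk h0
    have r1 := hrec k hk
    have r2 := hrec (k + 1) (by omega)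
    have r3 := hrec (k + 2) (by omega)
    rcases hb k hk with h | h
    · have b1 : b (k + 1) = -1 := hq2 _ (by omega) (by rw [r1, h0, h]; linarith)
      have u2 : u (k + 2) = -1 := by rw [r2, r1, h0, h, b1]; linarith
      have b2 : b (k + 2) = -1 := hq2 _ (by omega) (by rw [u2]; linarith)
      exact ⟨⟨by rw [b1, h], by rw [b2, h]⟩, by rw [r3, u2, b2]; ring⟩
    · have b1 : b (k + 1) = 1 := hq1 _ (by omega) (by rw [r1, h0, h]; linarith)
      have u2 : u (k + 2) = 1 := by rw [r2, r1, h0, h, b1]; linarith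
      have b2 : b (k + 2) = 1 := hq1 _ (by omega) (by rw [u2]; linarith)
      exact ⟨⟨by rw [b1, h]; ring, by rw [b2, h]; ring⟩, by rw [r3, u2, b2]; ring⟩
  have hz : ∀ j : ℕ, u (3 * j + 1) = 0 := by
    intro j
    induction j with
    | zero => exact hu1
    | succ n ih => exact (step (3 * n + 1) (by omega) ih).2
  intro j
  exact (step (3 * j + 1) (by omega) (hz j)).1
end

section
/- Let β be a real number with 1 < β ≤ 2 and let x ∈ [−1/(β−1), 1/(β−1)]. Then there exists a sequence (b_j)_{j≥1} with b_j ∈ {-1,1} for all j such that x = Σ_{j=1}^∞ b_j β^{-j}. -/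
/-- Every x ∈ [-1/(β-1), 1/(β-1)] admits a beta-expansion in base β ∈ (1,2] with
coefficients in {-1,1}. -/
theorem exists_beta_expansion (β x : ℝ) (hβ : 1 < β) (hβ' : β ≤ 2)
    (hx : x ∈ Set.Icc (-(1 / (β - 1))) (1 / (β - 1))) :
    ∃ b : ℕ → ℝ, (∀ j ≥ 1, b j = 1 ∨ b j = -1) ∧
      x = ∑' j : ℕ, b (j + 1) * β⁻¹ ^ (j + 1) := by
  classical
  obtain ⟨M, hM⟩ : ∃ M, M = 1 / (β - 1) := ⟨_, rfl⟩
  rw [← hM] at hx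
  have hpos : 0 < β - 1 := by linarith
  have hMe : M * (β - 1) = 1 := by rw [hM]; field_simp
  have hM1 : 1 ≤ M := by rw [hM, le_div_iff₀ hpos]; linarith
  let s : ℝ → ℝ := fun r => if 0 ≤ r then 1 else -1
  have hs : ∀ r, s r = 1 ∨ s r = -1 := by
    intro r
    by_cases h : 0 ≤ r <;> simp [s, h]
  let r : ℕ → ℝ := fun n => Nat.rec x (fun _ y => β * y - s y) n
  have r0 : r 0 = x := rfl
  have rS : ∀ n, r (n + 1) = β * r n - s (r n) := fun n => rfl
  have hr : ∀ n, |r n| ≤ M := by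
    intro n
    induction n with
    | zero => rw [r0]; exact abs_le.2 hx
    | succ n ih =>
      rw [rS]
      obtain ⟨h1, h2⟩ := abs_le.1 ih
      rcases le_or_gt 0 (r n) with h | h
      · have e : s (r n) = 1 := if_pos h
        rw [e, abs_le]
        constructor <;> nlinarith
      · have e : s (r n) = -1 := if_neg (not_le.2 h)
        rw [e, abs_le]

        constructor <;> nlinarith
  have hb0 : 0 ≤ β⁻¹ := by positivity
  have hb1 : β⁻¹ < 1 := inv_lt_one_of_one_lt₀ hβ
  have hsum : ∀ n, ∑ j ∈ Finset.range n, s (r j) * β⁻¹ ^ (j + 1) = x - r n * β⁻¹ ^ n := by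
    intro n
    induction n with
    | zero => simp [r0]
    | succ n ih =>
      rw [Finset.sum_range_succ, ih, rS, pow_succ]
      have : β * β⁻¹ = 1 := mul_inv_cancel₀ (by positivity)
      linear_combination (r n * β⁻¹ ^ n) * this
  refine ⟨fun j => s (r (j - 1)), fun j _ => hs _, ?_⟩
  simp only [Nat.add_sub_cancel]
  have hpow := tendsto_pow_atTop_nhds_zero_of_lt_one hb0 hb1
  have hsm : Summable (fun j : ℕ => s (r j) * β⁻¹ ^ (j + 1)) := by
    refine Summable.of_norm_bounded
      ((summable_nat_add_iff 1).2 (summable_geometric_of_lt_one hb0 hb1)) ?_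
    intro j
    rw [norm_mul, norm_pow, Real.norm_of_nonneg hb0]
    rcases hs (r j) with h | h <;> simp [h]
  have ht : Filter.Tendsto (fun n => r n * β⁻¹ ^ n) Filter.atTop (nhds 0) := by
    refine squeeze_zero_norm (a := fun n => M * β⁻¹ ^ n) ?_ (by simpa using hpow.const_mul M)
    intro n
    rw [norm_mul, norm_pow, Real.norm_of_nonneg hb0]
    exact mul_le_mul_of_nonneg_right (hr n) (by positivity)
  refine tendsto_nhds_unique ?_ hsm.hasSum.tendsto_sum_nat
  simp only [hsum]
  simpa using ht.const_sub x
end
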